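/- Assume a−b is odd and N_m ≠ 0 (i.e. the associated normalized rank-2 bundle with c_1 = −1 is unstable), and let k = max{ j ∈ ℤ : N_{m−j} ≠ 0 }. Then dim_K N_{m+t} = C(k+t+2, 2) for every integer t ≤ k, where C(n,2) denotes the binomial coefficient (with the convention C(n,2) = 0 for n < 2). -/

import Mathlib

open MvPolynomial

noncomputable section

variable {K : Type*} [Field K]

/-- `p` is homogeneous of (integer) degree `d`; for `d < 0` this forces `p = 0`. -/
def homog (p : MvPolynomial (Fin 3) K) (d : ℤ) : Prop :=
  IsWeightedHomogeneous (fun _ : Fin 3 => (1 : ℤ)) p d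

/-- The degree-`d` graded piece of `⊕_{i=1}^{N} R(-a i)`, as a `K`-subspace of
`Fin N → R`, `R = K[x,y,z]`. -/
def degPiece (N : ℕ) (a : Fin N → ℤ) (d : ℤ) :
    Submodule K (Fin N → MvPolynomial (Fin 3) K) :=
  Submodule.pi Set.univ fun i =>
    weightedHomogeneousSubmodule K (fun _ : Fin 3 => (1 : ℤ)) (d - a i)

lemma mem_degPiece {N : ℕ} {a : Fin N → ℤ} {d : ℤ} {v : Fin N → MvPolynomial (Fin 3) K} :
    v ∈ degPiece (K := K) N a d ↔ ∀ i, homog (v i) (d - a i) := by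
  simp [degPiece, Submodule.mem_pi, mem_weightedHomogeneousSubmodule, homog]

/-- The map `φ : ⊕ R(-a i) → ⊕ R(-b j)` given by the matrix `Φ`, as a `K`-linear map. -/
def phiK (n : ℕ) (Φ : Matrix (Fin n) (Fin (n + 2)) (MvPolynomial (Fin 3) K)) :
    (Fin (n + 2) → MvPolynomial (Fin 3) K) →ₗ[K] (Fin n → MvPolynomial (Fin 3) K) :=
  (Matrix.mulVecLin Φ).restrictScalars K

/-- The degree-`d` graded piece of `N = ker φ`. -/
def Nd (n : ℕ) (a : Fin (n + 2) → ℤ) (Φ : Matrix (Fin n) (Fin (n + 2)) (MvPolynomial (Fin 3) K))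
    (d : ℤ) : Submodule K (Fin (n + 2) → MvPolynomial (Fin 3) K) :=
  degPiece (n + 2) a d ⊓ LinearMap.ker (phiK n Φ)

/-- The image of the degree-`d` piece of `F` inside the degree-`d` piece of `G`,
viewed as a subspace of the latter. -/
def MdSub (n : ℕ) (a : Fin (n + 2) → ℤ) (b : Fin n → ℤ)
    (Φ : Matrix (Fin n) (Fin (n + 2)) (MvPolynomial (Fin 3) K)) (d : ℤ) :
    Submodule K ↥(degPiece (K := K) n b d) :=
  Submodule.comap (degPiece (K := K) n b d).subtype
    (Submodule.map (phiK n Φ) (degPiece (n + 2) a d))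

/-- The degree-`d` graded piece of `M = coker φ`. -/
abbrev Md (n : ℕ) (a : Fin (n + 2) → ℤ) (b : Fin n → ℤ)
    (Φ : Matrix (Fin n) (Fin (n + 2)) (MvPolynomial (Fin 3) K)) (d : ℤ) :=
  ↥(degPiece (K := K) n b d) ⧸ MdSub n a b Φ d

/-- Multiplication by `L` on tuples of polynomials, as a `K`-linear map. -/
def mulL (N : ℕ) (L : MvPolynomial (Fin 3) K) :
    (Fin N → MvPolynomial (Fin 3) K) →ₗ[K] (Fin N → MvPolynomial (Fin 3) K) :=
  ((LinearMap.lsmul (MvPolynomial (Fin 3) K) (Fin N → MvPolynomial (Fin 3) K)) L).restrictScalars K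

lemma mulL_apply {N : ℕ} (L : MvPolynomial (Fin 3) K) (v : Fin N → MvPolynomial (Fin 3) K) :
    mulL N L v = L • v := rfl

lemma mulL_mem {N : ℕ} {a : Fin N → ℤ} {L : MvPolynomial (Fin 3) K} (hL : homog L 1)
    {d : ℤ} {v : Fin N → MvPolynomial (Fin 3) K} (hv : v ∈ degPiece (K := K) N a (d - 1)) :
    mulL N L v ∈ degPiece (K := K) N a d := by
  rw [mem_degPiece] at hv ⊢
  intro i
  have h := hL.mul (hv i)
  have e : (1 : ℤ) + (d - 1 - a i) = d - a i := by ring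
  rw [e] at h
  simpa [mulL_apply, smul_eq_mul, homog] using h

/-- Multiplication by `L` from the degree-`d-1` piece of `G` to the degree-`d` piece. -/
def mulLres (n : ℕ) (b : Fin n → ℤ) (L : MvPolynomial (Fin 3) K) (hL : homog L 1) (d : ℤ) :
    ↥(degPiece (K := K) n b (d - 1)) →ₗ[K] ↥(degPiece (K := K) n b d) :=
  (mulL n L).restrict fun _ hv => mulL_mem hL hv

lemma mulLres_comap (n : ℕ) (a : Fin (n + 2) → ℤ) (b : Fin n → ℤ)
    (Φ : Matrix (Fin n) (Fin (n + 2)) (MvPolynomial (Fin 3) K))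
    (L : MvPolynomial (Fin 3) K) (hL : homog L 1) (d : ℤ) :
    MdSub n a b Φ (d - 1) ≤ Submodule.comap (mulLres n b L hL d) (MdSub n a b Φ d) := by
  rintro ⟨w, hw⟩ hmem
  obtain ⟨v, hv, hφv⟩ := hmem
  refine ⟨mulL (n + 2) L v, mulL_mem hL hv, ?_⟩
  show phiK n Φ (mulL (n + 2) L v) = ((mulLres n b L hL d) ⟨w, hw⟩ : Fin n → MvPolynomial (Fin 3) K)
  have : phiK n Φ (mulL (n + 2) L v) = L • phiK n Φ v := by
    simp [phiK, mulL_apply]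
  rw [this, hφv]
  rfl

/-- The map induced by multiplication by `L` from `M_{d-1}` to `M_d`,
where `M = coker φ`. -/
def mulLmap (n : ℕ) (a : Fin (n + 2) → ℤ) (b : Fin n → ℤ)
    (Φ : Matrix (Fin n) (Fin (n + 2)) (MvPolynomial (Fin 3) K))
    (L : MvPolynomial (Fin 3) K) (hL : homog L 1) (d : ℤ) :
    Md n a b Φ (d - 1) →ₗ[K] Md n a b Φ d :=
  Submodule.mapQ (MdSub n a b Φ (d - 1)) (MdSub n a b Φ d) (mulLres n b L hL d)
    (mulLres_comap n a b Φ L hL d)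

/-- The linear form with coefficient vector `c`. -/
def linform (c : Fin 3 → K) : MvPolynomial (Fin 3) K := ∑ i, C (c i) * X i

lemma homog_linform (c : Fin 3 → K) : homog (linform c) 1 := by
  rw [homog, ← mem_weightedHomogeneousSubmodule]
  refine sum_mem fun i _ => ?_
  rw [mem_weightedHomogeneousSubmodule]
  simpa using (isWeightedHomogeneous_C (fun _ : Fin 3 => (1 : ℤ)) (c i)).mul
    (isWeightedHomogeneous_X K (fun _ : Fin 3 => (1 : ℤ)) i)

/-- Finite length of `coker φ`: all sufficiently high graded pieces vanish. -/
def FiniteColength (n : ℕ) (a : Fin (n + 2) → ℤ) (b : Fin n → ℤ)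
    (Φ : Matrix (Fin n) (Fin (n + 2)) (MvPolynomial (Fin 3) K)) : Prop :=
  ∃ D : ℤ, ∀ d : ℤ, D ≤ d →
    degPiece (K := K) n b d ≤ Submodule.map (phiK n Φ) (degPiece (n + 2) a d)

end

/-!
If `Φ * Ψ = f • 1`, then `fⁿ` times the minor of rows `i, j` of two vectors `s, v` of the kernel
is `det [Φ; eᵢ; eⱼ] * det [Ψ | s v]`. Since the cokernel has finite length, `f` can be a high power
of `x` or of `y`, and these are coprime, so `det [Φ; eᵢ; eⱼ]` divides the minor. The quotient is
homogeneous of degree `deg s + deg v - (a - b)`; it is `s ∧ v` under `Λ² N → R(b - a)`.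

When this degree is negative, all the minors vanish and `v` is proportional to `s`. If moreover `s`
has the least degree in the kernel, its entries have no nonconstant common factor, so `v` is a
multiple of `s`. Hence `N_e = R_{e - d} s` whenever `d + e < a - b`, where `d = deg s`.
-/

section GradedRing

open DirectSum SetLike

variable {ι A S : Type*} [DecidableEq ι] [Semiring A] [SetLike S A] [AddSubmonoidClass S A]
  (𝒜 : ι → S)

lemma coe_decompose_mul_of_uniqueAdd [AddMonoid ι] [GradedRing 𝒜]
    [∀ (i : ι) (x : 𝒜 i), Decidable (x ≠ 0)] {p q : A} {i j : ι}
    (hij : UniqueAdd (decompose 𝒜 p).support (decompose 𝒜 q).support i j) :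
    (decompose 𝒜 (p * q) (i + j) : A) = decompose 𝒜 p i * decompose 𝒜 q j := by
  rw [decompose_mul, coe_mul_apply]
  refine Finset.sum_eq_single (i, j) (fun x hx hne => ?_) fun hnot => ?_
  · obtain ⟨hx, hsum⟩ := Finset.mem_filter.mp hx
    obtain ⟨hx₁, hx₂⟩ := Finset.mem_product.mp hx
    exact absurd (Prod.ext_iff.mpr (hij hx₁ hx₂ hsum)) hne
  · by_contra hne
    refine hnot (Finset.mem_filter.mpr ⟨Finset.mem_product.mpr ⟨?_, ?_⟩, rfl⟩) <;>
      refine DFinsupp.mem_support_iff.mpr fun h => hne ?_ <;> simp [h]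

lemma isHomogeneousElem_left_of_mul [AddMonoid ι] [TwoUniqueSums ι] [NoZeroDivisors A]
    [GradedRing 𝒜] {p q : A} (hpq : IsHomogeneousElem 𝒜 (p * q)) (h0 : p * q ≠ 0) :
    IsHomogeneousElem 𝒜 p := by
  classical
  obtain ⟨d, hd⟩ := hpq
  set P := (decompose 𝒜 p).support with hP
  set Q := (decompose 𝒜 q).support
  have support_nonempty {r : A} (hr : r ≠ 0) : (decompose 𝒜 r).support.Nonempty := by
    rw [← sum_support_decompose 𝒜 r] at hr
    exact Finset.nonempty_of_sum_ne_zero hr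
  have add_eq_of_uniqueAdd {x : ι × ι} (hx : x ∈ P ×ˢ Q) (huniq : UniqueAdd P Q x.1 x.2) :
      x.1 + x.2 = d := by
    by_contra hne
    have hmul := coe_decompose_mul_of_uniqueAdd 𝒜 huniq
    rw [decompose_of_mem_ne 𝒜 hd (Ne.symm hne)] at hmul
    have hx := Finset.mem_product.mp hx
    rcases mul_eq_zero.mp hmul.symm with h | h
    · exact DFinsupp.mem_support_iff.mp hx.1 (Subtype.ext h)
    · exact DFinsupp.mem_support_iff.mp hx.2 (Subtype.ext h)
  have hcard : ¬ 1 < P.card * Q.card := fun hlt => by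
    obtain ⟨x, hx, y, hy, hxy, hux, huy⟩ := TwoUniqueSums.uniqueAdd_of_one_lt_card hlt
    obtain ⟨hxP, hxQ⟩ := Finset.mem_product.mp hx
    exact hxy (Prod.ext_iff.mpr (huy hxP hxQ
      ((add_eq_of_uniqueAdd hx hux).trans (add_eq_of_uniqueAdd hy huy).symm)))
  have hPcard : P.card = 1 := le_antisymm
    ((Nat.le_mul_of_pos_right _ (support_nonempty (right_ne_zero_of_mul h0)).card_pos).trans
      (not_lt.mp hcard))
    (support_nonempty (left_ne_zero_of_mul h0)).card_pos
  obtain ⟨i, hi⟩ := Finset.card_eq_one.mp hPcard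
  refine ⟨i, ?_⟩
  rw [← sum_support_decompose 𝒜 p, ← hP, hi, Finset.sum_singleton]
  exact SetLike.coe_mem _

lemma mem_of_mul_mem_of_left_mem [AddLeftCancelMonoid ι] [IsLeftCancelMulZero A] [GradedRing 𝒜]
    {p q : A} {i j : ι} (hp : p ∈ 𝒜 i) (hp0 : p ≠ 0) (hpq : p * q ∈ 𝒜 (i + j)) : q ∈ 𝒜 j := by
  have hcomp : p * decompose 𝒜 q j = p * q := by
    rw [← coe_decompose_mul_add_of_left_mem 𝒜 hp, decompose_of_mem_same 𝒜 hpq]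
  exact mul_left_cancel₀ hp0 hcomp ▸ SetLike.coe_mem _

end GradedRing

section Divisibility

lemma dvd_of_isRelPrime_of_dvd_mul {M : Type*} [CommMonoidWithZero M] [IsCancelMulZero M]
    [DecompositionMonoid M] {f g x w : M} (hfg : IsRelPrime f g) (hf : x ∣ f * w)
    (hg : x ∣ g * w) : x ∣ w := by
  rcases eq_or_ne w 0 with rfl | hw
  · exact dvd_zero x
  obtain ⟨y, z, hyf, ⟨w', rfl⟩, rfl⟩ := exists_dvd_and_dvd_of_dvd_mul hf
  have hz : z ≠ 0 := left_ne_zero_of_mul hw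
  have hyw' : y ∣ g * w' := by
    rw [mul_left_comm, mul_comm y] at hg
    exact (mul_dvd_mul_iff_left hz).mp hg
  rw [mul_comm y]
  exact mul_dvd_mul_left z ((hfg.of_dvd_left hyf).dvd_of_dvd_mul_left hyw')

lemma exists_eq_smul_of_mul_eq_mul {R ι : Type*} [CommRing R] [IsDomain R]
    [UniqueFactorizationMonoid R] {s v : ι → R} (hs : s ≠ 0)
    (hsv : ∀ i j, s i * v j = v i * s j) :
    ∃ (q p : R) (s' : ι → R), s = q • s' ∧ v = p • s' := by
  obtain ⟨i, hi⟩ := Function.ne_iff.mp hs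
  obtain ⟨q, p, g, hqp, hq, hp⟩ := UniqueFactorizationMonoid.exists_reduced_factors (s i) hi (v i)
  have hg : g ≠ 0 := left_ne_zero_of_mul (hq ▸ hi)
  have hq0 : q ≠ 0 := right_ne_zero_of_mul (hq ▸ hi)
  have hcross (j : ι) : q * v j = p * s j :=
    mul_left_cancel₀ hg (by rw [← mul_assoc, ← mul_assoc, hq, hp, hsv])
  choose s' hs' using fun j => hqp.dvd_of_dvd_mul_left ⟨v j, (hcross j).symm⟩
  refine ⟨q, p, s', funext hs', funext fun j => mul_left_cancel₀ hq0 ?_⟩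
  rw [hcross, hs', mul_left_comm, Pi.smul_apply, smul_eq_mul]

end Divisibility

section Determinant

open Matrix

lemma det_fromRows_mul_det_fromCols {R m p ι : Type*} [CommRing R] [Fintype m] [Fintype p]
    [Fintype ι] [DecidableEq m] [DecidableEq p] (e : m ⊕ p ≃ ι) (Φ : Matrix m ι R)
    (T : Matrix p ι R) (Ψ : Matrix ι m R) {S : Matrix ι p R} (hS : Φ * S = 0) :
    ((fromRows Φ T).submatrix id e).det * ((fromCols Ψ S).submatrix e id).det =
      (Φ * Ψ).det * (T * S).det := by
  rw [← det_mul, submatrix_mul_equiv, submatrix_id_id, fromRows_mul_fromCols, hS,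
    det_fromBlocks_zero₁₂]

lemma isWeightedHomogeneous_det {R σ M ι : Type*} [CommRing R] [AddCommGroup M] [Fintype ι]
    [DecidableEq ι] {w : σ → M} {A : Matrix ι ι (MvPolynomial σ R)} {r c : ι → M}
    (hA : ∀ i j, IsWeightedHomogeneous w (A i j) (c j - r i)) :
    IsWeightedHomogeneous w A.det (∑ j, c j - ∑ i, r i) := by
  rw [det_apply, ← mem_weightedHomogeneousSubmodule]
  refine sum_mem fun τ _ => ?_
  have hdeg : ∑ j, c j - ∑ i, r i = ∑ i, (c i - r (τ i)) := by
    rw [Finset.sum_sub_distrib, Equiv.sum_comp τ r]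
  rw [Units.smul_def, hdeg]
  exact zsmul_mem (IsWeightedHomogeneous.prod _ _ _ fun i _ => hA (τ i) i) _

end Determinant

section Homogeneous

lemma isRelPrime_X_X {R σ : Type*} [CommRing R] [IsDomain R] {i j : σ} (hij : i ≠ j) :
    IsRelPrime (X i : MvPolynomial σ R) (X j) :=
  (X_prime.irreducible.isRelPrime_iff_not_dvd).mpr fun h => hij (X_dvd_X.mp h)

lemma weight_const_one_eq_degree {σ : Type*} (u : σ →₀ ℕ) :
    Finsupp.weight (fun _ : σ => (1 : ℤ)) u = u.degree := by
  simp [Finsupp.weight_apply, Finsupp.sum, Finsupp.degree_apply]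

lemma isWeightedHomogeneous_const_one_natCast {R σ : Type*} [CommSemiring R]
    {p : MvPolynomial σ R} {d : ℕ} :
    IsWeightedHomogeneous (fun _ : σ => (1 : ℤ)) p d ↔ p.IsHomogeneous d := by
  refine forall₂_congr fun u _ => ?_
  rw [weight_const_one_eq_degree, Nat.cast_inj, Finsupp.degree_eq_weight_one]
  rfl

lemma finrank_homogeneousSubmodule {R σ : Type*} [CommRing R] [Nontrivial R] [Fintype σ] (d : ℕ) :
    Module.finrank R (homogeneousSubmodule σ R d) = (Fintype.card σ).multichoose d := by
  classical
  have hset : {u : σ →₀ ℕ | u.degree = d} = ↑((Finset.univ : Finset σ).finsuppAntidiag d) := by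
    ext u
    simp [Finsupp.degree_eq_sum, Finset.mem_finsuppAntidiag]
  rw [homogeneousSubmodule_eq_finsupp_supported, hset,
    (AddMonoidAlgebra.supportedEquivFinsupp _).finrank_eq, Module.finrank_finsupp_self,
    ← Nat.card_eq_fintype_card, Nat.card_coe_set_eq, Set.ncard_coe_finset,
    Finset.card_finsuppAntidiag_nat_eq_multichoose, Finset.card_univ]

attribute [local instance] weightedGradedAlgebra

variable {K : Type*} [Field K] {p q : MvPolynomial (Fin 3) K} {d e : ℤ}

lemma homog.nonneg (hp : homog p d) (hp0 : p ≠ 0) : 0 ≤ d := by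
  obtain ⟨u, hu⟩ := ne_zero_iff.mp hp0
  rw [← hp hu, weight_const_one_eq_degree]
  positivity

lemma homog.isUnit (hp : homog p 0) (hp0 : p ≠ 0) : IsUnit p := by
  have hdeg : p.totalDegree = 0 :=
    (totalDegree_zero_iff_isHomogeneous _).mpr (isWeightedHomogeneous_const_one_natCast.mp hp)
  rw [totalDegree_eq_zero_iff_eq_C] at hdeg
  rw [hdeg, Ne, C_eq_zero] at hp0
  exact hdeg ▸ (isUnit_iff_ne_zero.mpr hp0).map C

lemma homog.exists_homog_left (hpq : homog (p * q) d) (h0 : p * q ≠ 0) : ∃ e : ℤ, homog p e :=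
  isHomogeneousElem_left_of_mul
    (weightedHomogeneousSubmodule K (fun _ : Fin 3 => (1 : ℤ))) ⟨d, hpq⟩ h0

lemma homog.right_of_mul (hp : homog p e) (hp0 : p ≠ 0) (hpq : homog (p * q) (e + d)) :
    homog q d :=
  mem_of_mul_mem_of_left_mem
    (weightedHomogeneousSubmodule K (fun _ : Fin 3 => (1 : ℤ))) hp hp0 hpq

lemma finrank_weightedHomogeneousSubmodule_fin_three (d : ℤ) :
    Module.finrank K (weightedHomogeneousSubmodule K (fun _ : Fin 3 => (1 : ℤ)) d) =
      Nat.choose (d + 2).toNat 2 := by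
  rcases lt_or_ge d 0 with hd | hd
  · have hbot : weightedHomogeneousSubmodule K (fun _ : Fin 3 => (1 : ℤ)) d = ⊥ :=
      eq_bot_iff.mpr fun p hp => by_contra fun hp0 => hd.not_ge (homog.nonneg hp hp0)
    rw [hbot, finrank_bot, Nat.choose_eq_zero_of_lt (by omega)]
  · lift d to ℕ using hd
    have hsub : weightedHomogeneousSubmodule K (fun _ : Fin 3 => (1 : ℤ)) d =
        homogeneousSubmodule (Fin 3) K d :=
      Submodule.ext fun _ => isWeightedHomogeneous_const_one_natCast
    rw [hsub, finrank_homogeneousSubmodule, Fintype.card_fin, Nat.multichoose_eq,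
      show ((d : ℤ) + 2).toNat = d + 2 by omega, show 3 + d - 1 = d + 2 by omega,
      Nat.choose_symm_add]

end Homogeneous

section Kernel

open Matrix

variable {K : Type*} [Field K] {n : ℕ} {a : Fin (n + 2) → ℤ} {b : Fin n → ℤ}
  {Φ : Matrix (Fin n) (Fin (n + 2)) (MvPolynomial (Fin 3) K)} {d e : ℤ}
  {s v : Fin (n + 2) → MvPolynomial (Fin 3) K} {p : MvPolynomial (Fin 3) K}

lemma mem_Nd : v ∈ Nd n a Φ d ↔ (∀ i, homog (v i) (d - a i)) ∧ Φ *ᵥ v = 0 :=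
  and_congr mem_degPiece Iff.rfl

lemma smul_mem_Nd (hp : homog p e) (hv : v ∈ Nd n a Φ d) : p • v ∈ Nd n a Φ (e + d) := by
  rw [mem_Nd] at hv ⊢
  refine ⟨fun i => ?_, by rw [mulVec_smul, hv.2, smul_zero]⟩
  rw [add_sub_assoc]
  exact hp.mul (hv.1 i)

lemma mem_Nd_of_smul_mem (hp : homog p e) (hp0 : p ≠ 0) (hpv : p • v ∈ Nd n a Φ (e + d)) :
    v ∈ Nd n a Φ d := by
  rw [mem_Nd, mulVec_smul] at hpv
  refine mem_Nd.mpr ⟨fun i => hp.right_of_mul hp0 ?_, (smul_eq_zero.mp hpv.2).resolve_left hp0⟩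
  rw [← add_sub_assoc]
  exact hpv.1 i

lemma homog_of_smul_mem_Nd (hv : v ∈ Nd n a Φ d) (hv0 : v ≠ 0) (hpv : p • v ∈ Nd n a Φ (d + e)) :
    homog p e := by
  obtain ⟨i, hi⟩ := Function.ne_iff.mp hv0
  refine ((mem_Nd.mp hv).1 i).right_of_mul hi ?_
  rw [sub_add_eq_add_sub, mul_comm]
  exact (mem_Nd.mp hpv).1 i

lemma FiniteColength.exists_mul_eq_smul_one (hfin : FiniteColength n a b Φ) :
    ∃ D : ℕ, ∀ f : MvPolynomial (Fin 3) K, homog f D →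
      ∃ Ψ : Matrix (Fin (n + 2)) (Fin n) (MvPolynomial (Fin 3) K),
        Φ * Ψ = f • 1 ∧ ∀ i j, homog (Ψ i j) (b j + D - a i) := by
  obtain ⟨D₀, hD₀⟩ := hfin
  obtain ⟨B, hB⟩ := (Set.finite_range fun j => D₀ - b j).bddAbove
  refine ⟨B.toNat, fun f hf => ?_⟩
  have hlift (j : Fin n) :
      ∃ ψ ∈ degPiece (K := K) (n + 2) a (b j + B.toNat), phiK n Φ ψ = Pi.single j f := by
    have hj : D₀ - b j ≤ B := hB ⟨j, rfl⟩
    refine hD₀ (b j + B.toNat) (by omega) (mem_degPiece.mpr fun i => ?_)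
    rcases eq_or_ne i j with rfl | hij
    · rwa [Pi.single_eq_same, add_sub_cancel_left]
    · rw [Pi.single_eq_of_ne hij]
      exact isWeightedHomogeneous_zero _ _ _
  choose ψ hψ hΦψ using hlift
  refine ⟨of fun i j => ψ j i, ?_, fun i j => mem_degPiece.mp (hψ j) i⟩
  ext1 i j
  rw [Matrix.smul_apply, Matrix.one_apply]
  exact (congrFun (hΦψ j) i).trans (by simp [Pi.single_apply])

lemma exists_homog_pow_mul_det_eq {f : MvPolynomial (Fin 3) K} {D : ℤ}
    {Ψ : Matrix (Fin (n + 2)) (Fin n) (MvPolynomial (Fin 3) K)} (hΦΨ : Φ * Ψ = f • 1)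
    (hΨ : ∀ i j, homog (Ψ i j) (b j + D - a i))
    {S : Matrix (Fin (n + 2)) (Fin 2) (MvPolynomial (Fin 3) K)} {δ : Fin 2 → ℤ}
    (hΦS : Φ * S = 0) (hS : ∀ i l, homog (S i l) (δ l - a i)) :
    ∃ h, homog h (n * D + (∑ j, b j + ∑ l, δ l - ∑ i, a i)) ∧
      ∀ T : Matrix (Fin 2) (Fin (n + 2)) (MvPolynomial (Fin 3) K),
        f ^ n * (T * S).det = ((fromRows Φ T).submatrix id finSumFinEquiv).det * h := by
  refine ⟨((fromCols Ψ S).submatrix finSumFinEquiv id).det, ?_, fun T => ?_⟩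
  · have hdeg : n * D + (∑ j, b j + ∑ l, δ l - ∑ i, a i) =
        ∑ x, Sum.elim (fun j => b j + D) δ x - ∑ x, a (finSumFinEquiv x) := by
      simp only [Equiv.sum_comp finSumFinEquiv a, Fintype.sum_sum_type, Sum.elim_inl, Sum.elim_inr,
        Finset.sum_add_distrib, Finset.sum_const, Finset.card_univ, Fintype.card_fin, nsmul_eq_mul]
      ring
    rw [hdeg]
    exact isWeightedHomogeneous_det (by rintro i (j | l); exacts [hΨ _ j, hS _ l])
  · rw [det_fromRows_mul_det_fromCols _ _ _ _ hΦS, hΦΨ, det_smul, det_one, Fintype.card_fin,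
      mul_one]

lemma FiniteColength.exists_det_eq_det_mul (hfin : FiniteColength n a b Φ)
    {S : Matrix (Fin (n + 2)) (Fin 2) (MvPolynomial (Fin 3) K)} {δ : Fin 2 → ℤ}
    (hΦS : Φ * S = 0) (hS : ∀ i l, homog (S i l) (δ l - a i))
    (T : Matrix (Fin 2) (Fin (n + 2)) (MvPolynomial (Fin 3) K)) :
    ∃ u, homog u (∑ j, b j + ∑ l, δ l - ∑ i, a i) ∧
      (T * S).det = ((fromRows Φ T).submatrix id finSumFinEquiv).det * u := by
  obtain ⟨D, hD⟩ := hfin.exists_mul_eq_smul_one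
  set Δ := ((fromRows Φ T).submatrix id finSumFinEquiv).det
  have hX (x : Fin 3) : homog (X x ^ D : MvPolynomial (Fin 3) K) D :=
    isWeightedHomogeneous_const_one_natCast.mpr (isHomogeneous_X_pow x D)
  have hmul (x : Fin 3) : ∃ h, homog h (n * D + (∑ j, b j + ∑ l, δ l - ∑ i, a i)) ∧
      (X x ^ D) ^ n * (T * S).det = Δ * h := by
    obtain ⟨Ψ, hΦΨ, hΨ⟩ := hD _ (hX x)
    obtain ⟨h, hh, hT⟩ := exists_homog_pow_mul_det_eq hΦΨ hΨ hΦS hS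
    exact ⟨h, hh, hT T⟩
  obtain ⟨h₀, hh₀, hmul₀⟩ := hmul 0
  obtain ⟨h₁, -, hmul₁⟩ := hmul 1
  obtain ⟨u, hu⟩ : Δ ∣ (T * S).det :=
    dvd_of_isRelPrime_of_dvd_mul (isRelPrime_X_X (by decide)).pow.pow ⟨h₀, hmul₀⟩ ⟨h₁, hmul₁⟩
  rcases eq_or_ne Δ 0 with hΔ | hΔ
  · exact ⟨0, isWeightedHomogeneous_zero _ _ _, by rw [hu, hΔ, zero_mul, zero_mul]⟩
  have hh₀u : (X 0 ^ D) ^ n * u = h₀ :=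
    mul_left_cancel₀ hΔ (by rw [← hmul₀, hu, mul_left_comm])
  have hXn : homog ((X 0 ^ D) ^ n : MvPolynomial (Fin 3) K) (n * D) := by
    simpa only [homog, nsmul_eq_mul] using (hX 0).pow n
  exact ⟨u, hXn.right_of_mul (pow_ne_zero _ (pow_ne_zero _ (X_ne_zero 0))) (hh₀u ▸ hh₀), hu⟩

lemma FiniteColength.mul_eq_mul_of_mem_Nd (hfin : FiniteColength n a b Φ)
    (hde : d + e < ∑ i, a i - ∑ j, b j) (hs : s ∈ Nd n a Φ d) (hv : v ∈ Nd n a Φ e)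
    (i j : Fin (n + 2)) : s i * v j = v i * s j := by
  rw [mem_Nd] at hs hv
  obtain ⟨u, hu, hdet⟩ := hfin.exists_det_eq_det_mul (S := (of ![s, v])ᵀ) (δ := ![d, e])
    (by
      ext1 k l
      fin_cases l
      exacts [congrFun hs.2 k, congrFun hv.2 k])
    (fun k l => by
      fin_cases l
      exacts [hs.1 k, hv.1 k])
    ((1 : Matrix (Fin (n + 2)) (Fin (n + 2)) _).submatrix ![i, j] (Equiv.refl _))
  have hu0 : u = 0 := by
    by_contra hu0
    have hdeg := hu.nonneg hu0
    rw [Fin.sum_univ_two] at hdeg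
    simp only [cons_val_zero, cons_val_one] at hdeg
    omega
  rw [hu0, mul_zero, one_submatrix_mul, det_fin_two] at hdet
  simpa [sub_eq_zero] using hdet

lemma exists_homog_eq_smul_of_isLeast (hd : IsLeast {f | Nd n a Φ f ≠ ⊥} d)
    (hs : s ∈ Nd n a Φ d) (hs0 : s ≠ 0) (hv : v ∈ Nd n a Φ e)
    (hsv : ∀ i j, s i * v j = v i * s j) :
    ∃ p : MvPolynomial (Fin 3) K, homog p (e - d) ∧ p • s = v := by
  obtain ⟨q, r, s', rfl, rfl⟩ := exists_eq_smul_of_mul_eq_mul hs0 hsv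
  have hq0 : q ≠ 0 := left_ne_zero_of_smul hs0
  have hs'0 : s' ≠ 0 := right_ne_zero_of_smul hs0
  obtain ⟨i, hi⟩ := Function.ne_iff.mp hs0
  obtain ⟨f, hf⟩ := ((mem_Nd.mp hs).1 i).exists_homog_left hi
  have hs' : s' ∈ Nd n a Φ (d - f) := mem_Nd_of_smul_mem hf hq0 (by rwa [add_sub_cancel])
  have hdf : d ≤ d - f := hd.2 (Submodule.ne_bot_iff _ |>.mpr ⟨s', hs', hs'0⟩)
  obtain rfl : f = 0 := by
    have := hf.nonneg hq0
    omega
  obtain ⟨c, rfl⟩ := hf.isUnit hq0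
  have hrc : (r * (c⁻¹ : (MvPolynomial (Fin 3) K)ˣ)) • (c : MvPolynomial (Fin 3) K) • s' =
      r • s' := by
    rw [smul_smul, Units.inv_mul_cancel_right]
  refine ⟨r * (c⁻¹ : (MvPolynomial (Fin 3) K)ˣ), homog_of_smul_mem_Nd hs hs0 ?_, hrc⟩
  rwa [hrc, add_sub_cancel]

end Kernel

theorem statement9_general {K : Type*} [Field K] {n : ℕ} {a : Fin (n + 2) → ℤ} {b : Fin n → ℤ}
    {Φ : Matrix (Fin n) (Fin (n + 2)) (MvPolynomial (Fin 3) K)} (hfin : FiniteColength n a b Φ)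
    {d e : ℤ} (hd : IsLeast {f | Nd n a Φ f ≠ ⊥} d) (hde : d + e < ∑ i, a i - ∑ j, b j) :
    Module.finrank K (Nd n a Φ e) = Nat.choose (e - d + 2).toNat 2 := by
  obtain ⟨s, hs, hs0⟩ := Submodule.exists_mem_ne_zero_of_ne_bot hd.1
  let mulS := (LinearMap.toSpanSingleton (MvPolynomial (Fin 3) K) _ s).restrictScalars K
  have hinj : Function.Injective mulS := smul_left_injective (MvPolynomial (Fin 3) K) hs0
  have hNd : Nd n a Φ e =
      (weightedHomogeneousSubmodule K (fun _ : Fin 3 => (1 : ℤ)) (e - d)).map mulS := by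
    ext v
    constructor
    · exact fun hv => exists_homog_eq_smul_of_isLeast hd hs hs0 hv
        (hfin.mul_eq_mul_of_mem_Nd hde hs hv)
    · rintro ⟨p, hp, rfl⟩
      exact sub_add_cancel e d ▸ smul_mem_Nd hp hs
  rw [hNd, ← finrank_weightedHomogeneousSubmodule_fin_three (K := K)]
  exact (Submodule.equivMapOfInjective mulS hinj _).finrank_eq.symm

/-- If `a - b` is odd (`a - b = 2m + 1`) and `N_m ≠ 0` (the associated
normalized rank-2 bundle with `c₁ = -1` is unstable), and `k = max{ j : N_{m-j} ≠ 0 }`, then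
`dim_K N_{m+t} = C(k+t+2, 2)` for every integer `t ≤ k` (with `C(n,2) = 0` for `n < 2`). -/
theorem statement9 {K : Type*} [Field K] [IsAlgClosed K] [CharZero K]
    (n : ℕ) (a : Fin (n + 2) → ℤ) (b : Fin n → ℤ)
    (Φ : Matrix (Fin n) (Fin (n + 2)) (MvPolynomial (Fin 3) K))
    (hΦ : ∀ j i, homog (Φ j i) (a i - b j))
    (hfin : FiniteColength n a b Φ)
    (m : ℤ) (hm : (∑ i, a i) - (∑ j, b j) = 2 * m + 1)
    (hunstable : Nd n a Φ m ≠ ⊥)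
    (k : ℤ) (hk₁ : Nd n a Φ (m - k) ≠ ⊥) (hk₂ : ∀ j : ℤ, Nd n a Φ (m - j) ≠ ⊥ → j ≤ k) :
    ∀ t : ℤ, t ≤ k →
      Module.finrank K (Nd n a Φ (m + t)) = Nat.choose (k + t + 2).toNat 2 := by
  intro t ht
  have hleast : IsLeast {f | Nd n a Φ f ≠ ⊥} (m - k) :=
    ⟨hk₁, fun f hf => sub_le_comm.mp (hk₂ (m - f) (by rwa [sub_sub_cancel]))⟩
  rw [statement9_general hfin hleast (by omega), show m + t - (m - k) = k + t by ring]
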